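/- arXiv:1805.11855 — 2 statements merged into one kernel-verified Lean document; each statement's English description precedes it below -/
import Mathlib

section
/- Let real parameters α₁, α₂, α₃, β₁, β₂, β₃ satisfy: 1+α₁+α₂+α₃ = β₁+β₂+β₃; 0 < α₂ < β₃ ≤ 2+α₁; 0 < α₃ < min(β₁, β₂); (1+α₁)α₂α₃ ≤ β₁β₂β₃; and additionally β₃ > 1+α₁ and β₃ ≥ 1+α₂. Put σ = α₁+α₂−β₃ and define Ωₙ = Σ_{k=0}^{n} A_{n,k} B_k, where A_{n,k} = C(n,k) (k+1+α₁−β₃)_{n−k} (β₃−α₂)_{n−k} (n+α₁)_k / (n+1+σ)_k and B_k = [(α₂)_k (β₁−α₃)_k (β₂−α₃)_k / ((β₁)_k (β₂)_k)] · c_k with c₀ = 1 and c_k = (1+σ)_{k−1}(2k+σ) for k ≥ 1. Then for every integer n ≥ 2, Ωₙ > (2+α₁−β₃)_{n−1} (1+β₃−α₂)_{n−1} Ω₁. -/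
/-- Pochhammer symbol `(a)_k = a (a+1) ⋯ (a+k-1)` for a real number `a`. -/
noncomputable def poch (a : ℝ) (k : ℕ) : ℝ := ∏ i ∈ Finset.range k, (a + i)

/-- The coefficient `A_{n,k}` in the ₇F₆ series obtained from Whipple's transformation. -/
noncomputable def Acoef (α₁ α₂ β₃ σ : ℝ) (n k : ℕ) : ℝ :=
  (n.choose k) * poch ((k : ℝ) + 1 + α₁ - β₃) (n - k) * poch (β₃ - α₂) (n - k) *
    poch ((n : ℝ) + α₁) k / poch ((n : ℝ) + 1 + σ) k

/-- The factor `c_k`, with `c₀ = 1` and `c_k = (1+σ)_{k−1}(2k+σ)` for `k ≥ 1`. -/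
noncomputable def ccoef (σ : ℝ) (k : ℕ) : ℝ :=
  if k = 0 then 1 else poch (1 + σ) (k - 1) * (2 * (k : ℝ) + σ)

/-- The coefficient `B_k` in the ₇F₆ series obtained from Whipple's transformation. -/
noncomputable def Bcoef (α₂ α₃ β₁ β₂ σ : ℝ) (k : ℕ) : ℝ :=
  poch α₂ k * poch (β₁ - α₃) k * poch (β₂ - α₃) k / (poch β₁ k * poch β₂ k) * ccoef σ k

/-- `Ωₙ = Σ_{k=0}^{n} A_{n,k} B_k`. -/
noncomputable def Omega (α₁ α₂ α₃ β₁ β₂ β₃ σ : ℝ) (n : ℕ) : ℝ :=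
  ∑ k ∈ Finset.range (n + 1), Acoef α₁ α₂ β₃ σ n k * Bcoef α₂ α₃ β₁ β₂ σ k

lemma poch_pos' (a : ℝ) (h : 0 < a) (k : ℕ) : 0 < poch a k := by
  unfold poch
  exact Finset.prod_pos fun i _ => by positivity

lemma poch_nonneg' (a : ℝ) (h : 0 ≤ a) (k : ℕ) : 0 ≤ poch a k := by
  unfold poch
  exact Finset.prod_nonneg fun i _ => by positivity

lemma poch_succ_left' (a : ℝ) (k : ℕ) : poch a (k + 1) = a * poch (a + 1) k := by
  unfold poch
  rw [Finset.prod_range_succ']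
  push_cast
  rw [mul_comm]
  congr 1
  · simp
  · exact Finset.prod_congr rfl fun i _ => by ring

lemma poch_succ_right' (a : ℝ) (k : ℕ) : poch a (k + 1) = poch a k * (a + k) := by
  unfold poch
  rw [Finset.prod_range_succ]

lemma poch_zero' (a : ℝ) : poch a 0 = 1 := by simp [poch]

lemma poch_one' (a : ℝ) : poch a 1 = a := by simp [poch]

lemma key_ineq (m s t : ℝ) (hm : 0 ≤ m) (ht : 0 ≤ t) (hs : 0 < s - 1 - t) :
    s / (s - t) ≤ (m + 1) * ((1 + t) / (1 + t + m)) * ((m + s) / (m + s - t)) := by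
  have h1 : 0 < s - t := by linarith
  have h2 : 0 < 1 + t + m := by linarith
  have h3 : 0 < m + s - t := by linarith
  have h4 : (m + 1) * ((1 + t) / (1 + t + m)) * ((m + s) / (m + s - t))
      = ((m + 1) * (1 + t) * (m + s)) / ((1 + t + m) * (m + s - t)) := by
    field_simp
  rw [h4, div_le_div_iff₀ h1 (mul_pos h2 h3)]
  have h5 : 0 ≤ t * (s - 1 - t) * (m * (m + 1 + s)) := by
    have : 0 ≤ m + 1 + s := by linarith
    positivity
  nlinarith [h5]

theorem stmt2 (α₁ α₂ α₃ β₁ β₂ β₃ : ℝ)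
    (hA1 : 1 + α₁ + α₂ + α₃ = β₁ + β₂ + β₃)
    (hA2a : 0 < α₂) (hA2b : α₂ < β₃) (hA2c : β₃ ≤ 2 + α₁)
    (hA3a : 0 < α₃) (hA3b : α₃ < min β₁ β₂)
    (hA4 : (1 + α₁) * α₂ * α₃ ≤ β₁ * β₂ * β₃)
    (hcase1 : 1 + α₁ < β₃) (hcase2 : 1 + α₂ ≤ β₃) :
    ∀ n : ℕ, 2 ≤ n →
      poch (2 + α₁ - β₃) (n - 1) * poch (1 + β₃ - α₂) (n - 1) *
          Omega α₁ α₂ α₃ β₁ β₂ β₃ (α₁ + α₂ - β₃) 1 <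
        Omega α₁ α₂ α₃ β₁ β₂ β₃ (α₁ + α₂ - β₃) n := by
  intro n hn
  obtain ⟨m, rfl⟩ := Nat.exists_eq_add_of_le hn
  obtain ⟨h31, h32⟩ := lt_min_iff.mp hA3b
  set σ := α₁ + α₂ - β₃ with hσ
  have hσ1 : 0 < 1 + σ := by linarith
  have hm : (0 : ℝ) ≤ m := Nat.cast_nonneg m
  have hB : ∀ k, 0 < Bcoef α₂ α₃ β₁ β₂ σ k := by
    intro k
    unfold Bcoef
    have hc : 0 < ccoef σ k := by
      unfold ccoef
      split_ifs with h
      · norm_num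
      · have : (1 : ℝ) ≤ k := by exact_mod_cast Nat.one_le_iff_ne_zero.mpr h
        exact mul_pos (poch_pos' _ hσ1 _) (by linarith)
    have h1 := poch_pos' α₂ hA2a k
    have h2 := poch_pos' (β₁ - α₃) (by linarith) k
    have h3 := poch_pos' (β₂ - α₃) (by linarith) k
    have h4 := poch_pos' β₁ (by linarith) k
    have h5 := poch_pos' β₂ (by linarith) k
    positivity
  have hApos : ∀ i ∈ Finset.range (m + 1),
      0 < Acoef α₁ α₂ β₃ σ (2 + m) (i + 1 + 1) * Bcoef α₂ α₃ β₁ β₂ σ (i + 1 + 1) := by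
    intro i hi
    rw [Finset.mem_range] at hi
    refine mul_pos ?_ (hB _)
    unfold Acoef
    have hi0 : (0 : ℝ) ≤ i := Nat.cast_nonneg i
    have h0 : (0 : ℝ) < ((2 + m).choose (i + 1 + 1) : ℝ) := by
      exact_mod_cast Nat.choose_pos (by omega)
    have h1 := poch_pos' (((i + 1 + 1 : ℕ) : ℝ) + 1 + α₁ - β₃) (by push_cast; linarith)
      (2 + m - (i + 1 + 1))
    have h2 := poch_pos' (β₃ - α₂) (by linarith) (2 + m - (i + 1 + 1))
    have h3 := poch_pos' (((2 + m : ℕ) : ℝ) + α₁) (by push_cast; linarith) (i + 1 + 1)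
    have h4 := poch_pos' (((2 + m : ℕ) : ℝ) + 1 + σ) (by push_cast; linarith) (i + 1 + 1)
    positivity
  have hsum := Finset.sum_pos hApos ⟨0, by simp⟩
  have e1 : Omega α₁ α₂ α₃ β₁ β₂ β₃ σ 1 = Acoef α₁ α₂ β₃ σ 1 1 * Bcoef α₂ α₃ β₁ β₂ σ 1
      + Acoef α₁ α₂ β₃ σ 1 0 * Bcoef α₂ α₃ β₁ β₂ σ 0 := by
    unfold Omega
    rw [Finset.sum_range_succ', Finset.sum_range_one]
  have e2 : Omega α₁ α₂ α₃ β₁ β₂ β₃ σ (2 + m) =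
      ∑ i ∈ Finset.range (m + 1),
        Acoef α₁ α₂ β₃ σ (2 + m) (i + 1 + 1) * Bcoef α₂ α₃ β₁ β₂ σ (i + 1 + 1)
      + Acoef α₁ α₂ β₃ σ (2 + m) 1 * Bcoef α₂ α₃ β₁ β₂ σ 1
      + Acoef α₁ α₂ β₃ σ (2 + m) 0 * Bcoef α₂ α₃ β₁ β₂ σ 0 := by
    unfold Omega
    rw [show 2 + m + 1 = (m + 1) + 1 + 1 by omega, Finset.sum_range_succ',
      Finset.sum_range_succ']
  have hn1 : 2 + m - 1 = m + 1 := by omega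
  rw [e1, e2, hn1]
  set P := poch (2 + α₁ - β₃) (m + 1) with hP
  set Q := poch (1 + β₃ - α₂) (m + 1) with hQ
  have hP0 : 0 ≤ P := poch_nonneg' _ (by linarith) _
  have hQ0 : 0 < Q := poch_pos' _ (by linarith) _
  have hA0 : Acoef α₁ α₂ β₃ σ (2 + m) 0 = P * Q * Acoef α₁ α₂ β₃ σ 1 0 := by
    unfold Acoef
    simp only [Nat.choose_zero_right, Nat.sub_zero, poch_zero', poch_one']
    rw [show 2 + m = (m + 1) + 1 by omega, poch_succ_left', poch_succ_left' (β₃ - α₂),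
      hP, hQ, show ((0 : ℕ) : ℝ) + 1 + α₁ - β₃ + 1 = 2 + α₁ - β₃ by push_cast; ring,
      show β₃ - α₂ + 1 = 1 + β₃ - α₂ by ring]
    ring
  have hR : (β₃ - α₂) * Q = poch (β₃ - α₂) (m + 1) * (β₃ - α₂ + (m + 1 : ℕ)) := by
    rw [← poch_succ_right', poch_succ_left', hQ, show β₃ - α₂ + 1 = 1 + β₃ - α₂ by ring]
  have hAA : P * Q * Acoef α₁ α₂ β₃ σ 1 1 ≤ Acoef α₁ α₂ β₃ σ (2 + m) 1 := by
    have hk := key_ineq (m + 1) (1 + α₁) (β₃ - α₂ - 1) (by linarith) (by linarith) (by linarith)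
    have hR' : poch (β₃ - α₂) (m + 1) = Q * ((β₃ - α₂) / (β₃ - α₂ + (m + 1))) := by
      have : 0 < β₃ - α₂ + (m + 1) := by linarith
      push_cast at hR
      field_simp
      linarith
    have hx := mul_le_mul_of_nonneg_left hk (mul_nonneg hP0 hQ0.le)
    unfold Acoef
    simp only [Nat.choose_one_right, Nat.choose_self, poch_one', Nat.sub_self, poch_zero', hn1]
    rw [hR', show ((1 : ℕ) : ℝ) + 1 + α₁ - β₃ = 2 + α₁ - β₃ by push_cast; ring, ← hP]
    push_cast
    rw [show (1 : ℝ) + 1 + σ = 1 + α₁ - (β₃ - α₂ - 1) by rw [hσ]; ring]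
    refine le_of_eq_of_le ?_ (le_of_le_of_eq hx ?_)
    · ring
    · rw [show (2 : ℝ) + m + 1 + σ = m + 1 + (1 + α₁) - (β₃ - α₂ - 1) by rw [hσ]; ring,
        show 1 + (β₃ - α₂ - 1) + ((m : ℝ) + 1) = β₃ - α₂ + (m + 1) by ring]
      ring
  have hfin := mul_le_mul_of_nonneg_right hAA (hB 1).le
  rw [hA0]
  linarith
end

section
/- Let α > −1 and β < α + 1 be real numbers. Then for every x > 0, ∫₀ˣ t^{−β} J_α(t) dt = x^{α−β+1} / (2^α (α−β+1) Γ(α+1)) · ₁F₂((α−β+1)/2; α+1, (α−β+3)/2; −x²/4), where ₁F₂(a; b, c; z) = Σ_{k=0}^{∞} (a)_k / (k! (b)_k (c)_k) z^k. -/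
open Real

/-- The generalized hypergeometric series `₁F₂(a; b, c; z)`. -/
noncomputable def oneF2 (a b c z : ℝ) : ℝ :=
  ∑' k : ℕ, poch a k / ((k.factorial : ℝ) * poch b k * poch c k) * z ^ k

/-- The Bessel function of the first kind of real order `α`. -/
noncomputable def besselJ (α : ℝ) (t : ℝ) : ℝ :=
  ∑' k : ℕ, (-1 : ℝ) ^ k / ((k.factorial : ℝ) * Real.Gamma (α + k + 1)) *
    (t / 2) ^ (2 * (k : ℝ) + α)

theorem poch_succ (b : ℝ) (k : ℕ) : poch b (k + 1) = poch b k * (b + k) := by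
  simp [poch, Finset.prod_range_succ]

theorem poch_pos {b : ℝ} (hb : 0 < b) (k : ℕ) : 0 < poch b k := by
  unfold poch
  exact Finset.prod_pos fun i _ => by positivity

theorem poch_lower {b : ℝ} (hb : 0 < b) (k : ℕ) : min b 1 ≤ poch b k := by
  cases k with
  | zero => simp [poch]
  | succ n =>
    refine (min_le_left _ _).trans ?_
    induction n with
    | zero => simp [poch]
    | succ n ih =>
      rw [poch_succ]
      have h1 : (1 : ℝ) ≤ b + ((n + 1 : ℕ) : ℝ) := by
        push_cast
        have : (0 : ℝ) ≤ n := Nat.cast_nonneg n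
        linarith
      nlinarith [poch_pos hb (n + 1)]

theorem gamma_poch {b : ℝ} (hb : 0 < b) (k : ℕ) :
    Real.Gamma (b + k) = Real.Gamma b * poch b k := by
  induction k with
  | zero => simp [poch]
  | succ n ih =>
    have h : b + (n : ℝ) ≠ 0 := by positivity
    rw [poch_succ]
    push_cast
    rw [← add_assoc, Real.Gamma_add_one h, ih]
    ring

theorem poch_ratio {s : ℝ} (hs : 0 < s) (k : ℕ) :
    poch s k * (s + k) = s * poch (s + 1) k := by
  induction k with
  | zero => simp [poch]
  | succ n ih =>
    rw [poch_succ s, poch_succ (s + 1), ih]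
    push_cast
    ring

theorem summable_aux {s b : ℝ} (hs : 0 < s) (hb : 0 < b) (z : ℝ) :
    Summable fun k : ℕ =>
      |poch s k / ((k.factorial : ℝ) * poch b k * poch (s + 1) k) * z ^ k| := by
  have h0 : Summable fun k : ℕ => (1 / min b 1) * (|z| ^ k / (k.factorial : ℝ)) :=
    (Real.summable_pow_div_factorial |z|).mul_left _
  refine Summable.of_nonneg_of_le (fun _ => abs_nonneg _) (fun k => ?_) h0
  have h1 := poch_pos hs k
  have h2 := poch_pos hb k
  have h3 := poch_pos (by linarith : 0 < s + 1) k
  have hm : 0 < min b 1 := lt_min hb one_pos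
  have h4 : poch s k ≤ poch (s + 1) k := by
    unfold poch
    exact Finset.prod_le_prod (fun i _ => by positivity) (fun i _ => by linarith)
  have hf : (0 : ℝ) < k.factorial := by positivity
  rw [abs_mul, abs_pow, abs_of_pos (by positivity)]
  have : poch s k / ((k.factorial : ℝ) * poch b k * poch (s + 1) k)
      = (poch s k / poch (s + 1) k) * (1 / poch b k) * (1 / (k.factorial : ℝ)) := by
    field_simp
  rw [this]
  have h5 : poch s k / poch (s + 1) k ≤ 1 := (div_le_one h3).2 h4
  have h6 : 1 / poch b k ≤ 1 / min b 1 := one_div_le_one_div_of_le hm (poch_lower hb k)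
  calc (poch s k / poch (s + 1) k) * (1 / poch b k) * (1 / (k.factorial : ℝ)) * |z| ^ k
      ≤ 1 * (1 / min b 1) * (1 / (k.factorial : ℝ)) * |z| ^ k := by gcongr
    _ = _ := by ring

theorem stmt7 (α β : ℝ) (hα : -1 < α) (hβ : β < α + 1) :
    ∀ x : ℝ, 0 < x →
      ∫ t in (0 : ℝ)..x, t ^ (-β) * besselJ α t =
        x ^ (α - β + 1) / ((2 : ℝ) ^ α * (α - β + 1) * Real.Gamma (α + 1)) *
          oneF2 ((α - β + 1) / 2) (α + 1) ((α - β + 3) / 2) (-x ^ 2 / 4) := by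
  intro x hx
  obtain ⟨s, hs⟩ : ∃ s, s = (α - β + 1) / 2 := ⟨_, rfl⟩
  have hs0 : 0 < s := by rw [hs]; linarith
  have hb0 : 0 < α + 1 := by linarith
  have hβs : β = α + 1 - 2 * s := by rw [hs]; ring
  clear hs
  subst hβs
  have e1 : (α - (α + 1 - 2 * s) + 1) = 2 * s := by ring
  have e2 : (α - (α + 1 - 2 * s) + 3) / 2 = s + 1 := by ring
  have e3 : 2 * s / 2 = s := by ring
  rw [e2, e1, e3]
  have hG := Real.Gamma_pos_of_pos hb0
  set C : ℝ := x ^ (2 * s) / ((2 : ℝ) ^ α * (2 * s) * Real.Gamma (α + 1)) with hC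
  set T : ℕ → ℝ := fun k =>
    poch s k / ((k.factorial : ℝ) * poch (α + 1) k * poch (s + 1) k) * (-x ^ 2 / 4) ^ k with hT
  set d : ℕ → ℝ := fun k =>
    (-1 : ℝ) ^ k / ((k.factorial : ℝ) * Real.Gamma (α + k + 1)) / 2 ^ (2 * (k : ℝ) + α) with hd
  set F : ℕ → ℝ → ℝ := fun k t => d k * t ^ (2 * (k : ℝ) + 2 * s - 1) with hF
  have hp : ∀ k : ℕ, -1 < 2 * (k : ℝ) + 2 * s - 1 := fun k => by
    have : (0 : ℝ) ≤ k := Nat.cast_nonneg k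
    linarith
  have hint : ∀ (c : ℝ) (k : ℕ),
      ∫ t in Set.Ioc 0 x, c * t ^ (2 * (k : ℝ) + 2 * s - 1)
        = c * (x ^ (2 * (k : ℝ) + 2 * s) / (2 * (k : ℝ) + 2 * s)) := by
    intro c k
    rw [← intervalIntegral.integral_of_le hx.le, intervalIntegral.integral_const_mul,
      integral_rpow (Or.inl (hp k))]
    have := hp k
    rw [sub_add_cancel, Real.zero_rpow (by linarith), sub_zero]
  have hterm : ∀ k : ℕ, d k * (x ^ (2 * (k : ℝ) + 2 * s) / (2 * (k : ℝ) + 2 * s)) = C * T k := by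
    intro k
    have h1 := poch_pos hs0 k
    have h2 := poch_pos hb0 k
    have h3 := poch_pos (by linarith : 0 < s + 1) k
    have hr := poch_ratio hs0 k
    have hg : Real.Gamma (α + k + 1) = Real.Gamma (α + 1) * poch (α + 1) k := by
      rw [← gamma_poch hb0]; congr 1; ring
    have hx2 : x ^ (2 * (k : ℝ) + 2 * s) = (x ^ 2) ^ k * x ^ (2 * s) := by
      rw [Real.rpow_add hx, ← pow_mul, ← Real.rpow_natCast x (2 * k)]
      push_cast; rfl
    have h22 : (2 : ℝ) ^ (2 * (k : ℝ) + α) = 4 ^ k * 2 ^ α := by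
      rw [Real.rpow_add two_pos]
      congr 1
      rw [Real.rpow_mul two_pos.le, Real.rpow_natCast]
      norm_num
    have hz : (-x ^ 2 / 4) ^ k = (-1) ^ k * (x ^ 2) ^ k / 4 ^ k := by
      rw [← mul_pow, ← div_pow]; congr 1; ring
    have hk : (0 : ℝ) < s + k := by positivity
    have hrat : poch s k = s * poch (s + 1) k / (s + k) := by
      rw [eq_div_iff hk.ne', hr]
    simp only [hd, hC, hT]
    rw [hg, hx2, h22, hz, hrat]
    have h2a : (0 : ℝ) < 2 ^ α := by positivity
    have hkk : 2 * (k : ℝ) + 2 * s = 2 * (s + k) := by ring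
    rw [hkk]
    generalize poch (s + 1) k = P at *
    generalize poch (α + 1) k = Q at *
    generalize (2 : ℝ) ^ α = A at *
    generalize Real.Gamma (α + 1) = G at *
    generalize x ^ (2 * s) = X at *
    generalize s + (k : ℝ) = S at *
    have hf : (0 : ℝ) < k.factorial := by positivity
    field_simp
  have hFint : ∀ k, MeasureTheory.Integrable (F k)
      (MeasureTheory.volume.restrict (Set.Ioc 0 x)) := by
    intro k
    have := (intervalIntegral.intervalIntegrable_rpow' (a := 0) (b := x) (hp k)).const_mul (d k)
    exact (intervalIntegrable_iff_integrableOn_Ioc_of_le hx.le).1 this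
  have hnorm : ∀ k, ∫ t in Set.Ioc 0 x, ‖F k t‖ = |C| * |T k| := by
    intro k
    rw [← abs_mul, ← hterm, abs_mul, abs_of_pos (a := x ^ _ / _) (by positivity), ← hint]
    refine MeasureTheory.setIntegral_congr_fun measurableSet_Ioc fun t ht => ?_
    have : 0 < t := ht.1
    simp only [hF, Real.norm_eq_abs]
    rw [abs_mul, abs_of_pos (a := t ^ _) (by positivity)]
  have hsum : Summable fun k => ∫ t in Set.Ioc 0 x, ‖F k t‖ := by
    simp only [hnorm]
    exact (summable_aux hs0 hb0 _).mul_left _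
  have key := MeasureTheory.hasSum_integral_of_summable_integral_norm hFint hsum
  have hval : ∀ k, ∫ t in Set.Ioc 0 x, F k t = C * T k := fun k => by
    rw [← hterm, ← hint]
  simp only [hval] at key
  have hlhs : ∫ t in (0 : ℝ)..x, t ^ (-(α + 1 - 2 * s)) * besselJ α t
      = ∫ t in Set.Ioc 0 x, ∑' k, F k t := by
    rw [intervalIntegral.integral_of_le hx.le]
    refine MeasureTheory.setIntegral_congr_fun measurableSet_Ioc fun t ht => ?_
    have ht0 : 0 < t := ht.1
    simp only [besselJ]
    rw [← tsum_mul_left]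
    refine tsum_congr fun k => ?_
    simp only [hF, hd]
    have : (2 * (k : ℝ) + 2 * s - 1) = -(α + 1 - 2 * s) + (2 * (k : ℝ) + α) := by ring
    rw [this, Real.rpow_add ht0, Real.div_rpow ht0.le two_pos.le]
    ring
  rw [hlhs, ← key.tsum_eq, tsum_mul_left]
  rfl
end
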